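/- arXiv:1808.03613 — 2 statements merged into one kernel-verified Lean document; each statement's English description precedes it below -/
import Mathlib

section
/- In the RF relay model with L ≥ 1 relays, the probability of successful decoding is at most ∑ α(m, m_D, m_RD) · ∑ ∏_{j=1}^{L} B(m'_j, N_R, ε_RjD) · P2((m' + m_D, m − m_RD + m_D, m_D), K), where α(m, m_D, m_RD) = C(N_S, m_RD) · C(N_S − m_RD, m − m_RD) · C(N_S − m, m_D − m_RD) · (1−ε̃_SR)^m ε̃_SR^{N_S−m} (1−ε_SD)^{m_D} ε_SD^{N_S−m_D} with ε̃_SR = ∏_{j=1}^{L} ε_SRj; the outer sum is over integers m, m_D with 0 ≤ m, m_D ≤ N_S and m + m_D ≥ K, and m_RD with max(0, m + m_D − N_S) ≤ m_RD ≤ min(m, m_D); the inner sum is over integers m'_1, …, m'_L with 0 ≤ m'_j ≤ N_R and m' := ∑_{j=1}^{L} m'_j ≥ K − m_D. -/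
open Finset

/-- `P(m,K) = ∏_{i=0}^{K-1} (1 - q^{i-m})`. -/
noncomputable def Pfr (q m K : ℕ) : ℝ :=
  ∏ i ∈ Finset.range K, (1 - (q : ℝ) ^ ((i : ℤ) - (m : ℤ)))

/-- The Gaussian binomial coefficient `[K; r]_q`. -/
noncomputable def gaussBinom (q K r : ℕ) : ℝ :=
  ∏ i ∈ Finset.range r, (((q : ℝ) ^ (K - i) - 1) / ((q : ℝ) ^ (r - i) - 1))

/-- `P_r(m,K) = q^{-m(K-r)} · [K; r]_q · ∏_{i=0}^{r-1} (1 - q^{i-m})`. -/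
noncomputable def Prk (q m K r : ℕ) : ℝ :=
  (q : ℝ) ^ (-(m : ℤ) * ((K : ℤ) - (r : ℤ))) * gaussBinom q K r *
    ∏ i ∈ Finset.range r, (1 - (q : ℝ) ^ ((i : ℤ) - (m : ℤ)))

/-- `P2((m1,m2,m12),K)`; the lower bound `max(0, K-m1+m12, K-m2+m12)` is expressed
with truncated natural subtraction. -/
noncomputable def P2 (q K m1 m2 m12 : ℕ) : ℝ :=
  ∑ i ∈ Finset.Icc (max (K + m12 - m1) (K + m12 - m2)) (min m12 K),
    Prk q m12 K i * Pfr q (m1 - m12) (K - i) * Pfr q (m2 - m12) (K - i)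

/-- Binomial probability `B(m,N,ε) = C(N,m) (1-ε)^m ε^{N-m}`. -/
noncomputable def Bpmf (m N : ℕ) (ε : ℝ) : ℝ :=
  (N.choose m : ℝ) * (1 - ε) ^ m * ε ^ (N - m)

/-- The multinomial factor `α(m, m_D, m_RD)` of the RF model. -/
noncomputable def alphaRF (NS : ℕ) (εSR εSD : ℝ) (m mD mRD : ℕ) : ℝ :=
  (NS.choose mRD : ℝ) * ((NS - mRD).choose (m - mRD) : ℝ) *
    ((NS - m).choose (mD - mRD) : ℝ) *
    (1 - εSR) ^ m * εSR ^ (NS - m) * (1 - εSD) ^ mD * εSD ^ (NS - mD)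

/-! Fix the reception patterns. The packets the destination receives from the source span a random
subspace `W`, whose dimension follows the rank law `P_r(m_D, K)`. Decoding requires two events:
the `m'` relayed packets complete `W` to the whole space, and so do the `m - m_RD` packets known
to the relays only. Given all source packets, a relayed packet is uniform on a subspace, hence it
avoids any proper subspace at most as often as a uniform vector does; so the relayed packets
complete a subspace of codimension `d` with probability at most `P(m', d)`, and the packets known
to the relays only do so with probability exactly `P(m - m_RD, d)`, independently of the first
bound. Summing over `dim W` gives `P2`, and summing over the reception patterns gives the theorem,
since a packet is missed by all relays with probability `∏ j, ε_SRj`. -/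

section RankProbabilities

lemma pfr_zero_right (q m : ℕ) : Pfr q m 0 = 1 := by
  simp [Pfr]

lemma pfr_succ_right (q m k : ℕ) :
    Pfr q m (k + 1) = Pfr q m k * (1 - (q : ℝ) ^ ((k : ℤ) - (m : ℤ))) :=
  Finset.prod_range_succ _ k

lemma pfr_eq_zero_of_lt (q : ℕ) {m k : ℕ} (h : m < k) : Pfr q m k = 0 :=
  Finset.prod_eq_zero (Finset.mem_range.2 h) (by simp)

lemma pfr_zero_left (q k : ℕ) : Pfr q 0 k = if k = 0 then 1 else 0 := by
  split_ifs with h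
  · rw [h, pfr_zero_right]
  · exact pfr_eq_zero_of_lt q (Nat.pos_of_ne_zero h)

lemma pfr_nonneg {q : ℕ} (hq : 0 < q) (m k : ℕ) : 0 ≤ Pfr q m k := by
  rcases lt_or_ge m k with h | h
  · rw [pfr_eq_zero_of_lt q h]
  · refine Finset.prod_nonneg fun i hi => sub_nonneg.2 ?_
    have := Finset.mem_range.1 hi
    exact zpow_le_one_of_nonpos₀ (by exact_mod_cast hq) (by omega)

lemma pfr_antitone {q : ℕ} (hq : 0 < q) (m : ℕ) : Antitone (Pfr q m) := by
  refine antitone_nat_of_succ_le fun k => ?_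
  rw [pfr_succ_right]
  exact mul_le_of_le_one_right (pfr_nonneg hq m k) (sub_le_self _ (by positivity))

lemma pfr_succ_succ (q m k : ℕ) :
    Pfr q (m + 1) (k + 1) = (1 - (q : ℝ) ^ (-1 - (m : ℤ))) * Pfr q m k := by
  unfold Pfr
  rw [Finset.prod_range_succ', mul_comm]
  congr 1
  · push_cast
    ring_nf
  · refine Finset.prod_congr rfl fun i _ => ?_
    push_cast
    ring_nf

-- A further uniform vector lands in a subspace of codimension `k` with probability `q⁻ᵏ`.
lemma pfr_succ_left {q : ℕ} (hq : 0 < q) (m k : ℕ) :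
    Pfr q (m + 1) k = ((q : ℝ) ^ k)⁻¹ * Pfr q m k + (1 - ((q : ℝ) ^ k)⁻¹) * Pfr q m (k - 1) := by
  cases k with
  | zero => simp [pfr_zero_right]
  | succ k =>
    have hexp : (q : ℝ) ^ (-1 - (m : ℤ)) =
        ((q : ℝ) ^ (k + 1))⁻¹ * (q : ℝ) ^ ((k : ℤ) - (m : ℤ)) := by
      rw [← zpow_natCast, ← zpow_neg, ← zpow_add₀ (by positivity)]
      push_cast
      ring_nf
    rw [pfr_succ_succ, pfr_succ_right, hexp, Nat.add_sub_cancel]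
    ring

lemma gaussBinom_zero_right (q K : ℕ) : gaussBinom q K 0 = 1 := by
  simp [gaussBinom]

lemma gaussBinom_succ_right {q : ℕ} (hq : 1 < q) (K r : ℕ) :
    gaussBinom q K (r + 1) * ((q : ℝ) ^ (r + 1) - 1) =
      gaussBinom q K r * ((q : ℝ) ^ (K - r) - 1) := by
  have hne : (q : ℝ) ^ (r + 1) - 1 ≠ 0 :=
    (sub_pos.2 (one_lt_pow₀ (by exact_mod_cast hq) r.succ_ne_zero)).ne'
  unfold gaussBinom
  rw [Finset.prod_div_distrib, Finset.prod_div_distrib, Finset.prod_range_succ,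
    Finset.prod_range_succ' (fun i => (q : ℝ) ^ (r + 1 - i) - 1)]
  simp only [Nat.add_sub_add_right, Nat.sub_zero]
  field_simp

lemma prk_eq_mul_pfr (q m K r : ℕ) : Prk q m K r =
    (q : ℝ) ^ (-(m : ℤ) * ((K : ℤ) - (r : ℤ))) * gaussBinom q K r * Pfr q m r :=
  rfl

lemma prk_eq_zero_of_lt (q K : ℕ) {m r : ℕ} (h : m < r) : Prk q m K r = 0 := by
  rw [prk_eq_mul_pfr, pfr_eq_zero_of_lt q h, mul_zero]

lemma prk_zero_zero (q K : ℕ) : Prk q 0 K 0 = 1 := by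
  simp [prk_eq_mul_pfr, gaussBinom_zero_right, pfr_zero_right]

lemma prk_succ_zero {q : ℕ} (hq : 0 < q) (m K : ℕ) :
    Prk q (m + 1) K 0 = ((q : ℝ) ^ K)⁻¹ * Prk q m K 0 := by
  simp only [prk_eq_mul_pfr, gaussBinom_zero_right, pfr_zero_right, mul_one]
  rw [← zpow_natCast, ← zpow_neg, ← zpow_add₀ (by positivity)]
  push_cast
  ring_nf

lemma one_sub_inv_pow_mul_gaussBinom {q : ℕ} (hq : 1 < q) {K r : ℕ} (hr : r ≤ K) :
    (1 - ((q : ℝ) ^ (K - r))⁻¹) * gaussBinom q K r =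
      (q : ℝ) ^ ((r : ℤ) - K) * ((q : ℝ) ^ (r + 1) - 1) * gaussBinom q K (r + 1) := by
  have hpow : ((q : ℝ) ^ (K - r))⁻¹ = (q : ℝ) ^ ((r : ℤ) - K) := by
    rw [← zpow_natCast, ← zpow_neg, Nat.cast_sub hr, neg_sub]
  have hinv : ((q : ℝ) ^ (K - r))⁻¹ * (q : ℝ) ^ (K - r) = 1 := inv_mul_cancel₀ (by positivity)
  rw [← hpow]
  linear_combination -((q : ℝ) ^ (K - r))⁻¹ * gaussBinom_succ_right hq K r -
    gaussBinom q K r * hinv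

lemma one_sub_inv_pow_mul_prk {q : ℕ} (hq : 1 < q) (m : ℕ) {K r : ℕ} (hr : r ≤ K) :
    (1 - ((q : ℝ) ^ (K - r))⁻¹) * Prk q m K r =
      (q : ℝ) ^ (-((m : ℤ) + 1) * ((K : ℤ) - (r + 1))) * gaussBinom q K (r + 1) *
        ((q : ℝ) ^ ((r : ℤ) - m) - (q : ℝ) ^ (-1 - (m : ℤ))) * Pfr q m r := by
  have hq0 : (q : ℝ) ≠ 0 := by positivity
  have hexp : (q : ℝ) ^ (-(m : ℤ) * ((K : ℤ) - r)) * (q : ℝ) ^ ((r : ℤ) - K) =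
      (q : ℝ) ^ (-((m : ℤ) + 1) * ((K : ℤ) - (r + 1))) * (q : ℝ) ^ (-1 - (m : ℤ)) := by
    rw [← zpow_add₀ hq0, ← zpow_add₀ hq0]
    ring_nf
  have hsplit : (q : ℝ) ^ ((r : ℤ) - m) = (q : ℝ) ^ (-1 - (m : ℤ)) * (q : ℝ) ^ (r + 1) := by
    rw [← zpow_natCast, ← zpow_add₀ hq0]
    push_cast
    ring_nf
  rw [prk_eq_mul_pfr, hsplit]
  linear_combination (q : ℝ) ^ (-(m : ℤ) * ((K : ℤ) - r)) * Pfr q m r *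
      one_sub_inv_pow_mul_gaussBinom hq hr +
    ((q : ℝ) ^ (r + 1) - 1) * gaussBinom q K (r + 1) * Pfr q m r * hexp

lemma prk_succ_succ {q : ℕ} (hq : 1 < q) (m : ℕ) {K r : ℕ} (hr : r < K) :
    Prk q (m + 1) K (r + 1) = ((q : ℝ) ^ (K - (r + 1)))⁻¹ * Prk q m K (r + 1) +
      (1 - ((q : ℝ) ^ (K - r))⁻¹) * Prk q m K r := by
  have hexp : ((q : ℝ) ^ (K - (r + 1)))⁻¹ * (q : ℝ) ^ (-(m : ℤ) * ((K : ℤ) - (r + 1))) =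
      (q : ℝ) ^ (-((m : ℤ) + 1) * ((K : ℤ) - (r + 1))) := by
    rw [← zpow_natCast, ← zpow_neg, ← zpow_add₀ (by positivity), Nat.cast_sub hr]
    push_cast
    ring_nf
  rw [one_sub_inv_pow_mul_prk hq m hr.le, prk_eq_mul_pfr, prk_eq_mul_pfr, pfr_succ_succ,
    pfr_succ_right]
  push_cast
  linear_combination -gaussBinom q K (r + 1) * Pfr q m r * (1 - (q : ℝ) ^ ((r : ℤ) - m)) * hexp

/- The rank of a uniform matrix with `K` columns evolves as a Markov chain when rows are appended:
from rank `r` it stays put with probability `q^(r-K)` and increases by one otherwise. -/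
lemma sum_prk_succ_mul {q : ℕ} (hq : 1 < q) (m K : ℕ) (f : ℕ → ℝ) :
    ∑ r ∈ Finset.range (K + 1), Prk q (m + 1) K r * f r =
      ∑ r ∈ Finset.range (K + 1), Prk q m K r *
        (((q : ℝ) ^ (K - r))⁻¹ * f r + (1 - ((q : ℝ) ^ (K - r))⁻¹) * f (r + 1)) := by
  have hstep : ∀ r ∈ Finset.range K, Prk q (m + 1) K (r + 1) * f (r + 1) =
      Prk q m K (r + 1) * (((q : ℝ) ^ (K - (r + 1)))⁻¹ * f (r + 1)) +
        Prk q m K r * ((1 - ((q : ℝ) ^ (K - r))⁻¹) * f (r + 1)) := fun r hr => by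
    rw [prk_succ_succ hq m (Finset.mem_range.1 hr)]
    ring
  simp only [mul_add, Finset.sum_add_distrib]
  rw [Finset.sum_range_succ', Finset.sum_congr rfl hstep, Finset.sum_add_distrib,
    Finset.sum_range_succ' (fun r => Prk q m K r * (((q : ℝ) ^ (K - r))⁻¹ * f r)),
    Finset.sum_range_succ (fun r => Prk q m K r * ((1 - ((q : ℝ) ^ (K - r))⁻¹) * f (r + 1))),
    prk_succ_zero (by omega)]
  simp only [Nat.sub_self, Nat.sub_zero, pow_zero, inv_one, sub_self]
  ring

lemma p2_eq_sum_range (q K a b m : ℕ) :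
    P2 q K (a + m) (b + m) m =
      ∑ r ∈ Finset.range (K + 1), Prk q m K r * (Pfr q a (K - r) * Pfr q b (K - r)) := by
  unfold P2
  simp only [Nat.add_sub_cancel, mul_assoc]
  refine Finset.sum_subset (fun r hr => ?_) fun r hr hr' => ?_
  · simp only [Finset.mem_Icc, Finset.mem_range] at *
    omega
  · have hcases : a < K - r ∨ b < K - r ∨ m < r := by
      simp only [Finset.mem_Icc, Finset.mem_range] at *
      omega
    rcases hcases with ha | hb | hm
    · simp [pfr_eq_zero_of_lt q ha]
    · simp [pfr_eq_zero_of_lt q hb]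
    · simp [prk_eq_zero_of_lt q K hm]

lemma p2_eq_zero_of_left_lt (q b : ℕ) {K a m : ℕ} (h : a < K) : P2 q K a b m = 0 := by
  rw [P2, Finset.Icc_eq_empty (by simp only [le_inf_iff, sup_le_iff]; omega), Finset.sum_empty]

lemma p2_eq_zero_of_right_lt (q a : ℕ) {K b m : ℕ} (h : b < K) : P2 q K a b m = 0 := by
  rw [P2, Finset.Icc_eq_empty (by simp only [le_inf_iff, sup_le_iff]; omega), Finset.sum_empty]

end RankProbabilities

section RandomSubspaces

open Module Submodule
open scoped BigOperators

lemma expect_expect_update {ι X : Type*} [Fintype ι] [DecidableEq ι] [Fintype X] [Nonempty X]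
    (a : ι) (g : (ι → X) → ℝ) :
    𝔼 x : ι → X, 𝔼 v : X, g (Function.update x a v) = 𝔼 x, g x := by
  have hswap : 𝔼 p : (ι → X) × X, g (Function.update p.1 a p.2) = 𝔼 p : (ι → X) × X, g p.1 := by
    refine Finset.expect_nbij' (fun p => (Function.update p.1 a p.2, p.1 a))
      (fun p => (Function.update p.1 a p.2, p.1 a)) ?_ ?_ ?_ ?_ ?_ <;> simp
  calc 𝔼 x : ι → X, 𝔼 v : X, g (Function.update x a v)
      = 𝔼 p : (ι → X) × X, g (Function.update p.1 a p.2) := by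
        rw [← Finset.univ_product_univ, Finset.expect_product]
    _ = 𝔼 x, 𝔼 _v : X, g x := by
        rw [hswap, ← Finset.univ_product_univ, Finset.expect_product]
    _ = 𝔼 x, g x := by simp only [Fintype.expect_const]

variable {F V : Type*} [Field F] [AddCommGroup V] [Module F V]

section SpanOn

variable {ι : Type*}

variable (F) in
/-- The subspace spanned by the members of the family `x` with index in `S`: the span of the
packets received when the reception pattern is `S`. -/
def spanOn (x : ι → V) (S : Finset ι) : Submodule F V :=
  span F (x '' S)

@[simp]
lemma spanOn_empty (x : ι → V) : spanOn F x ∅ = ⊥ := by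
  simp [spanOn]

lemma spanOn_mono (x : ι → V) {S T : Finset ι} (h : S ⊆ T) : spanOn F x S ≤ spanOn F x T :=
  span_mono (Set.image_mono (Finset.coe_subset.2 h))

lemma mem_spanOn (x : ι → V) {S : Finset ι} {i : ι} (hi : i ∈ S) : x i ∈ spanOn F x S :=
  subset_span ⟨i, hi, rfl⟩

lemma spanOn_le {x : ι → V} {S : Finset ι} {W : Submodule F V} (h : ∀ i ∈ S, x i ∈ W) :
    spanOn F x S ≤ W :=
  span_le.2 (Set.image_subset_iff.2 h)

lemma dependsOn_spanOn (S : Finset ι) : DependsOn (fun x : ι → V => spanOn F x S) S :=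
  fun _ _ h => congrArg (span F) (Set.image_congr h)

variable [DecidableEq ι]

lemma spanOn_insert (x : ι → V) (S : Finset ι) (a : ι) :
    spanOn F x (insert a S) = spanOn F x S ⊔ span F {x a} := by
  rw [spanOn, Finset.coe_insert, Set.image_insert_eq, span_insert, sup_comm, spanOn]

lemma apply_update_of_dependsOn {α β : Type*} {f : (ι → α) → β} {S : Finset ι}
    (hf : DependsOn f S) {a : ι} (ha : a ∉ S) (x : ι → α) (v : α) :
    f (Function.update x a v) = f x :=
  hf fun _ hi => Function.update_of_ne (ne_of_mem_of_not_mem hi ha) _ _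

lemma spanOn_insert_update (x : ι → V) {S : Finset ι} {a : ι} (ha : a ∉ S) (v : V) :
    spanOn F (Function.update x a v) (insert a S) = spanOn F x S ⊔ span F {v} := by
  rw [spanOn_insert, Function.update_self]
  exact congrArg (· ⊔ _) (apply_update_of_dependsOn (dependsOn_spanOn S) ha x v)

end SpanOn

variable {X : Type*} [AddCommGroup X] [Module F X]

/-- The codimension of a subspace: the number of dimensions still missing from the packets that
span it. -/
noncomputable def codim (W : Submodule F V) : ℕ :=
  finrank F (V ⧸ W)

lemma codim_bot : codim (⊥ : Submodule F V) = finrank F V :=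
  (quotEquivOfEqBot _ rfl).finrank_eq

lemma codim_comap_le [FiniteDimensional F V] (ℓ : X →ₗ[F] V) (W : Submodule F V) :
    codim (W.comap ℓ) ≤ codim W := by
  refine LinearMap.finrank_le_finrank_of_injective (f := mapQ (W.comap ℓ) W ℓ le_rfl) ?_
  rw [← LinearMap.ker_eq_bot, ker_mapQ]
  simp

lemma codim_eq_zero_iff [FiniteDimensional F V] {W : Submodule F V} : codim W = 0 ↔ W = ⊤ := by
  rw [codim, finrank_zero_iff, Submodule.Quotient.subsingleton_iff]

lemma codim_sup_span_singleton [FiniteDimensional F V] {W : Submodule F V} {v : V}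
    (hv : v ∉ W) : codim (W ⊔ span F {v}) = codim W - 1 := by
  have hW := W.finrank_quotient_add_finrank
  have hsup := (W ⊔ span F {v}).finrank_quotient_add_finrank
  rw [finrank_sup_span_singleton hv] at hsup
  unfold codim
  omega

variable [Fintype F] [Fintype X]

local notation "q" => Fintype.card F

lemma expect_ite_mem_submodule (W : Submodule F X) [DecidablePred (· ∈ W)] (a b : ℝ) :
    𝔼 g : X, (if g ∈ W then a else b) =
      ((q : ℝ) ^ codim W)⁻¹ * a + (1 - ((q : ℝ) ^ codim W)⁻¹) * b := by
  have hcard : (Fintype.card X : ℝ) = (q : ℝ) ^ codim W * #{g : X | g ∈ W} := by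
    rw [← Fintype.card_subtype, card_eq_pow_finrank (K := F) (V := X),
      card_eq_pow_finrank (K := F) (V := W), codim, ← W.finrank_quotient_add_finrank, pow_add]
    push_cast
    rfl
  have hW : (#{g : X | g ∈ W} : ℝ) ≠ 0 := by
    exact_mod_cast (Finset.card_pos.2 ⟨0, by simp⟩).ne'
  have hsplit : ∀ g : X, (if g ∈ W then a else b) = (if g ∈ W then a - b else 0) + b := fun g => by
    split_ifs <;> ring
  simp only [hsplit, Finset.expect_add_distrib, Fintype.expect_const]
  rw [Fintype.expect_eq_sum_div_card, Finset.sum_ite, Finset.sum_const, Finset.sum_const_zero,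
    nsmul_eq_mul, hcard]
  field_simp
  ring

lemma expect_codim_sup_span_singleton [FiniteDimensional F V] (ℓ : X →ₗ[F] V)
    (W : Submodule F V) (f : ℕ → ℝ) :
    𝔼 g : X, f (codim (W ⊔ span F {ℓ g})) =
      ((q : ℝ) ^ codim (W.comap ℓ))⁻¹ * f (codim W) +
        (1 - ((q : ℝ) ^ codim (W.comap ℓ))⁻¹) * f (codim W - 1) := by
  classical
  rw [← expect_ite_mem_submodule (W.comap ℓ)]
  refine Finset.expect_congr rfl fun g _ => ?_
  split_ifs with h
  · rw [sup_eq_left.2 ((span_singleton_le_iff_mem _ _).2 (mem_comap.1 h))]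
  · rw [codim_sup_span_singleton (mt mem_comap.2 h)]

/- A vector uniform on the range of `ℓ` falls into `W` at least as likely as a vector uniform on
the whole space. -/
lemma expect_pfr_codim_sup_span_singleton_le [FiniteDimensional F V] (ℓ : X →ₗ[F] V)
    (W : Submodule F V) (n : ℕ) :
    𝔼 g : X, Pfr q n (codim (W ⊔ span F {ℓ g})) ≤ Pfr q (n + 1) (codim W) := by
  have hprob : ((q : ℝ) ^ codim W)⁻¹ ≤ ((q : ℝ) ^ codim (W.comap ℓ))⁻¹ :=
    inv_pow_le_inv_pow_of_le (by exact_mod_cast Fintype.card_pos) (codim_comap_le ℓ W)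
  have hanti := pfr_antitone (Fintype.card_pos (α := F)) n (Nat.sub_le (codim W) 1)
  rw [expect_codim_sup_span_singleton, pfr_succ_left Fintype.card_pos]
  linarith [mul_nonneg (sub_nonneg.2 hprob) (sub_nonneg.2 hanti)]

lemma expect_pfr_codim_sup_spanOn_le {κ : Type*} [Fintype κ] [DecidableEq κ]
    [FiniteDimensional F V] (ℓ : κ → X →ₗ[F] V) (T : Finset κ)
    (W : Submodule F V) (n : ℕ) :
    𝔼 G : κ → X, Pfr q n (codim (W ⊔ spanOn F (fun p => ℓ p (G p)) T)) ≤
      Pfr q (n + #T) (codim W) := by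
  induction T using Finset.induction_on generalizing W with
  | empty => simp
  | insert p T hp ih =>
    have hupdate : ∀ (G : κ → X) (g : X),
        W ⊔ spanOn F (fun r => ℓ r (Function.update G p g r)) (insert p T) =
          W ⊔ span F {ℓ p g} ⊔ spanOn F (fun r => ℓ r (G r)) T := fun G g => by
      have hcomp : (fun r => ℓ r (Function.update G p g r)) =
          Function.update (fun r => ℓ r (G r)) p (ℓ p g) := by
        ext r
        by_cases h : r = p
        · subst h; simp
        · simp [h]
      rw [hcomp, spanOn_insert_update _ hp, sup_comm (spanOn F _ T), sup_assoc]
    rw [← expect_expect_update p, Finset.expect_comm]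
    simp only [hupdate]
    calc _ ≤ 𝔼 g : X, Pfr q (n + #T) (codim (W ⊔ span F {ℓ p g})) :=
          Finset.expect_le_expect fun g _ => ih _
      _ ≤ Pfr q (n + #T + 1) (codim W) :=
          expect_pfr_codim_sup_span_singleton_le (ℓ p) W (n + #T)
      _ = Pfr q (n + #(insert p T)) (codim W) := by
          rw [Finset.card_insert_of_notMem hp, add_assoc]

section RandomFamilies

variable {ι : Type*} [Fintype ι] [DecidableEq ι] [Fintype V]

lemma expect_pfr_codim_sup_span_singleton (W : Submodule F V) (n : ℕ) :
    𝔼 v : V, Pfr q n (codim (W ⊔ span F {v})) = Pfr q (n + 1) (codim W) := by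
  have := expect_codim_sup_span_singleton LinearMap.id W (Pfr q n)
  simpa only [LinearMap.id_apply, comap_id, ← pfr_succ_left Fintype.card_pos] using this

lemma expect_mul_pfr_codim_spanOn_union {B S : Finset ι} (hBS : Disjoint B S)
    {φ : (ι → V) → ℝ} (hφ : DependsOn φ B) (n : ℕ) :
    𝔼 x : ι → V, φ x * Pfr q n (codim (spanOn F x (B ∪ S))) =
      𝔼 x : ι → V, φ x * Pfr q (n + #S) (codim (spanOn F x B)) := by
  induction S using Finset.induction_on generalizing n with
  | empty => simp
  | insert a S ha ih =>
    rw [Finset.disjoint_insert_right] at hBS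
    have ha' : a ∉ B ∪ S := by simp [ha, hBS.1]
    rw [Finset.union_insert, ← expect_expect_update a, Finset.card_insert_of_notMem ha,
      add_comm #S, ← add_assoc, ← ih hBS.2]
    simp only [apply_update_of_dependsOn hφ hBS.1, spanOn_insert_update _ ha', ← Finset.mul_expect,
      expect_pfr_codim_sup_span_singleton]

lemma expect_codim_spanOn (B : Finset ι) (f : ℕ → ℝ) :
    𝔼 x : ι → V, f (codim (spanOn F x B)) =
      ∑ r ∈ Finset.range (finrank F V + 1), Prk q #B (finrank F V) r * f (finrank F V - r) := by
  induction B using Finset.induction_on generalizing f with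
  | empty =>
    rw [Finset.sum_eq_single_of_mem 0 (by simp) fun r _ hr => by
      rw [Finset.card_empty, prk_eq_zero_of_lt _ _ (Nat.pos_of_ne_zero hr), zero_mul]]
    simp [prk_zero_zero, codim_bot]
  | insert a B ha ih =>
    have hstep : ∀ W : Submodule F V, 𝔼 v : V, f (codim (W ⊔ span F {v})) =
        ((q : ℝ) ^ codim W)⁻¹ * f (codim W) +
          (1 - ((q : ℝ) ^ codim W)⁻¹) * f (codim W - 1) := fun W => by
      simpa only [LinearMap.id_apply, comap_id] using
        expect_codim_sup_span_singleton LinearMap.id W f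
    rw [← expect_expect_update a, Finset.card_insert_of_notMem ha,
      sum_prk_succ_mul Fintype.one_lt_card]
    simp only [spanOn_insert_update _ ha, hstep, Nat.sub_add_eq]
    exact ih fun d => ((q : ℝ) ^ d)⁻¹ * f d + (1 - ((q : ℝ) ^ d)⁻¹) * f (d - 1)

/- The span is everything only if the relayed vectors complete `spanOn F x B` and the vectors
indexed by `S` do so too. Given the vectors indexed by `B`, uniform relayed vectors would make these
events independent; the actual ones do worse, whatever the vectors indexed by `S` are. -/
lemma expect_pfr_zero_codim_sup_le_p2 {κ : Type*} [Fintype κ] [DecidableEq κ] {B S : Finset ι}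
    (hBS : Disjoint B S) (T : Finset κ) (ℓ : (ι → V) → κ → X →ₗ[F] V)
    (hℓ : ∀ x p g, ℓ x p g ∈ spanOn F x (B ∪ S)) :
    𝔼 x : ι → V, 𝔼 G : κ → X,
        Pfr q 0 (codim (spanOn F x B ⊔ spanOn F (fun p => ℓ x p (G p)) T)) ≤
      P2 q (finrank F V) (#T + #B) (#S + #B) #B := by
  have hpoint : ∀ x : ι → V, 𝔼 G : κ → X,
        Pfr q 0 (codim (spanOn F x B ⊔ spanOn F (fun p => ℓ x p (G p)) T)) ≤
      Pfr q #T (codim (spanOn F x B)) * Pfr q 0 (codim (spanOn F x (B ∪ S))) := fun x => by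
    by_cases hx : spanOn F x (B ∪ S) = ⊤
    · rw [codim_eq_zero_iff.2 hx, pfr_zero_right, mul_one]
      simpa only [zero_add] using expect_pfr_codim_sup_spanOn_le (ℓ x) T (spanOn F x B) 0
    · rw [pfr_zero_left, if_neg (mt codim_eq_zero_iff.1 hx), mul_zero]
      refine (Finset.expect_eq_zero fun G _ => ?_).le
      rw [pfr_zero_left, if_neg fun h => hx (top_le_iff.1 ?_)]
      rw [← codim_eq_zero_iff.1 h]
      exact sup_le (spanOn_mono x Finset.subset_union_left) (spanOn_le fun p _ => hℓ x p (G p))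
  have hdep : DependsOn (fun x : ι → V => Pfr q #T (codim (spanOn F x B))) B :=
    fun _ _ h => congrArg (fun W => Pfr q #T (codim W)) (dependsOn_spanOn B h)
  calc _ ≤ 𝔼 x : ι → V,
          Pfr q #T (codim (spanOn F x B)) * Pfr q 0 (codim (spanOn F x (B ∪ S))) :=
        Finset.expect_le_expect fun x _ => hpoint x
    _ = 𝔼 x : ι → V, Pfr q #T (codim (spanOn F x B)) * Pfr q #S (codim (spanOn F x B)) := by
        rw [expect_mul_pfr_codim_spanOn_union hBS hdep, zero_add]
    _ = P2 q (finrank F V) (#T + #B) (#S + #B) #B := by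
        rw [p2_eq_sum_range]
        exact expect_codim_spanOn B fun d => Pfr q #T d * Pfr q #S d

end RandomFamilies

end RandomSubspaces

section ErasurePatterns

variable {ι : Type*} [Fintype ι]

/-- The probability of the reception pattern `d` on a memoryless channel with erasure probability
`ε`; packet `i` is received iff `d i = true`. -/
def patternProb (ε : ℝ) (d : ι → Bool) : ℝ :=
  ∏ i, if d i then 1 - ε else ε

/-- The set of packets received under the reception pattern `d`. -/
def received (d : ι → Bool) : Finset ι :=
  {i | d i = true}

@[simp]
lemma mem_received {d : ι → Bool} {i : ι} : i ∈ received d ↔ d i = true := by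
  simp [received]

lemma patternProb_nonneg {ε : ℝ} (hε : ε ∈ Set.Icc 0 1) (d : ι → Bool) : 0 ≤ patternProb ε d :=
  Finset.prod_nonneg fun i _ => by
    split_ifs
    exacts [sub_nonneg.2 hε.2, hε.1]

lemma patternProb_eq_pow (ε : ℝ) (d : ι → Bool) :
    patternProb ε d = (1 - ε) ^ #(received d) * ε ^ (Fintype.card ι - #(received d)) := by
  classical
  rw [patternProb, Finset.prod_ite, Finset.prod_const, Finset.prod_const, Finset.filter_not,
    Finset.card_sdiff_of_subset (Finset.filter_subset _ _), Finset.card_univ, received]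

/-- The packets received by at least one of the relays, whose reception patterns are `a j`. -/
def unionPattern {ρ : Type*} [Fintype ρ] (a : ρ → ι → Bool) : ι → Bool :=
  fun i => decide (∃ j, a j i = true)

lemma received_subset_unionPattern {ρ : Type*} [Fintype ρ] (a : ρ → ι → Bool) (j : ρ) :
    received (a j) ⊆ received (unionPattern a) := fun i hi => by
  simpa [unionPattern] using ⟨j, mem_received.1 hi⟩

variable [DecidableEq ι]

lemma sum_patternProb_mul (ε : ℝ) (f : Finset ι → ℝ) :
    ∑ d, patternProb ε d * f (received d) =
      ∑ S : Finset ι, (1 - ε) ^ #S * ε ^ (Fintype.card ι - #S) * f S := by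
  refine Finset.sum_nbij' received (fun S i => decide (i ∈ S)) ?_ ?_ ?_ ?_ ?_
  · simp
  · simp
  · simp
  · intro S _
    ext i
    simp
  · intro d _
    rw [patternProb_eq_pow]

lemma sum_patternProb_mul_card (ε : ℝ) (f : ℕ → ℝ) :
    ∑ d : ι → Bool, patternProb ε d * f #(received d) =
      ∑ n ∈ Finset.range (Fintype.card ι + 1), Bpmf n (Fintype.card ι) ε * f n := by
  rw [sum_patternProb_mul ε fun S => f #S, ← Finset.powerset_univ,
    Finset.sum_powerset_apply_card fun n => (1 - ε) ^ n * ε ^ (Fintype.card ι - n) * f n,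
    Finset.card_univ]
  refine Finset.sum_congr rfl fun n _ => ?_
  rw [nsmul_eq_mul, Bpmf]
  ring

/- Product weights push forward to product weights when the map acts coordinatewise. -/
lemma sum_prod_mul_comp {κ α β R : Type*} [Fintype κ] [DecidableEq κ] [Fintype α] [DecidableEq β]
    [CommSemiring R] {μ : κ → α → R} {ν : κ → β → R} {φ : κ → α → β} {t : κ → Finset β}
    (hφ : ∀ k a, φ k a ∈ t k) (hν : ∀ k, ∀ b ∈ t k, ∑ a with φ k a = b, μ k a = ν k b)
    (f : (κ → β) → R) :
    ∑ a : κ → α, (∏ k, μ k (a k)) * f (fun k => φ k (a k)) =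
      ∑ b ∈ Fintype.piFinset t, (∏ k, ν k (b k)) * f b := by
  rw [← Finset.sum_fiberwise_of_maps_to (t := Fintype.piFinset t)
    (g := fun a k => φ k (a k)) fun a _ => Fintype.mem_piFinset.2 fun k => hφ k (a k)]
  refine Finset.sum_congr rfl fun b hb => ?_
  have hfiber : ({a : κ → α | (fun k => φ k (a k)) = b} : Finset _) =
      Fintype.piFinset fun k => {x | φ k x = b k} := by
    ext a
    simp [funext_iff]
  rw [Finset.prod_congr rfl fun k _ => (hν k (b k) (Fintype.mem_piFinset.1 hb k)).symm,
    Finset.prod_univ_sum, Finset.sum_mul, hfiber]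
  refine Finset.sum_congr rfl fun a ha => ?_
  rw [← funext fun k => (Finset.mem_filter.1 (Fintype.mem_piFinset.1 ha k)).2]

lemma sum_prod_patternProb_mul_card {ρ : Type*} [Fintype ρ] [DecidableEq ρ] (ε : ρ → ℝ)
    (f : (ρ → ℕ) → ℝ) :
    ∑ d : ρ → ι → Bool, (∏ j, patternProb (ε j) (d j)) * f (fun j => #(received (d j))) =
      ∑ v ∈ Fintype.piFinset fun _ : ρ => Finset.range (Fintype.card ι + 1),
        (∏ j, Bpmf (v j) (Fintype.card ι) (ε j)) * f v := by
  refine sum_prod_mul_comp (μ := fun j => patternProb (ε j))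
    (ν := fun j n => Bpmf n (Fintype.card ι) (ε j)) (φ := fun _ d => #(received d))
    (fun _ _ => ?_) (fun j n hn => ?_) f
  · exact Finset.mem_range.2 (Nat.lt_succ_of_le (Finset.card_le_univ _))
  · have := sum_patternProb_mul_card (ι := ι) (ε j) fun k => if k = n then 1 else 0
    simpa [Finset.sum_filter, hn] using this

lemma sum_patternProb_exists_eq {ρ : Type*} [Fintype ρ] [DecidableEq ρ] (ε : ρ → ℝ) (u : Bool) :
    ∑ c : ρ → Bool with decide (∃ j, c j = true) = u, (∏ j, if c j then 1 - ε j else ε j) =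
      if u then 1 - ∏ j, ε j else ∏ j, ε j := by
  have hnone : ({c | ¬ ∃ j, c j = true} : Finset (ρ → Bool)) = {fun _ => false} := by
    ext c
    simp [funext_iff]
  have htotal : ∑ c : ρ → Bool, (∏ j, if c j then 1 - ε j else ε j) = 1 := by
    rw [← Fintype.prod_sum fun j (c : Bool) => if c then 1 - ε j else ε j]
    simp
  rw [← Finset.sum_filter_add_sum_filter_not _ fun c : ρ → Bool => ∃ j, c j = true, hnone] at htotal
  cases u
  · simp only [decide_eq_false_iff_not, hnone]
    simp
  · simp only [decide_eq_true_eq, if_true]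
    simpa only [Finset.sum_singleton, Bool.false_eq_true, if_false, eq_sub_iff_add_eq] using htotal

lemma sum_prod_patternProb_mul_unionPattern {ρ : Type*} [Fintype ρ] [DecidableEq ρ] (ε : ρ → ℝ)
    (f : (ι → Bool) → ℝ) :
    ∑ a : ρ → ι → Bool, (∏ j, patternProb (ε j) (a j)) * f (unionPattern a) =
      ∑ u, patternProb (∏ j, ε j) u * f u := by
  have hcol := sum_prod_mul_comp (κ := ι) (t := fun _ => Finset.univ) (fun _ _ => Finset.mem_univ _)
    (fun _ u _ => sum_patternProb_exists_eq ε u) f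
  rw [Fintype.piFinset_univ] at hcol
  refine Eq.trans (Fintype.sum_equiv (Equiv.piComm _) _ _ fun a => ?_) hcol
  unfold patternProb
  rw [Finset.prod_comm]
  rfl

lemma sum_card_card_inter (U : Finset ι) (g : ℕ → ℕ → ℝ) :
    ∑ B : Finset ι, g #B #(U ∩ B) =
      ∑ s ∈ Finset.range (#U + 1), ∑ t ∈ Finset.range (Fintype.card ι - #U + 1),
        ((#U).choose s : ℝ) * ((Fintype.card ι - #U).choose t : ℝ) * g (s + t) s := by
  have hsplit : ∑ B : Finset ι, g #B #(U ∩ B) =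
      ∑ p ∈ U.powerset ×ˢ Uᶜ.powerset, g (#p.1 + #p.2) #p.1 := by
    refine Finset.sum_nbij' (fun B => (U ∩ B, B \ U)) (fun p => p.1 ∪ p.2) ?_ ?_ ?_ ?_ ?_
    · intro B _
      simp [Finset.inter_subset_left, Finset.subset_compl_iff_disjoint_right,
        Finset.sdiff_disjoint]
    · simp
    · intro B _
      rw [Finset.inter_comm, Finset.union_comm, Finset.sdiff_union_inter]
    · rintro ⟨S, T⟩ hST
      simp only [Finset.mem_product, Finset.mem_powerset, Finset.subset_compl_iff_disjoint_left]
        at hST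
      simp only [Finset.inter_union_distrib_left, Finset.union_sdiff_distrib,
        Finset.inter_eq_right.2 hST.1, Finset.disjoint_iff_inter_eq_empty.1 hST.2,
        Finset.sdiff_eq_empty_iff_subset.2 hST.1, Finset.sdiff_eq_self_of_disjoint hST.2.symm,
        Finset.union_empty, Finset.empty_union]
    · intro B _
      rw [Finset.inter_comm, add_comm, Finset.card_sdiff_add_card_inter]
  rw [hsplit, Finset.sum_product, Finset.sum_powerset_apply_card
    fun s => ∑ T ∈ Uᶜ.powerset, g (s + #T) s]
  refine Finset.sum_congr rfl fun s _ => ?_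
  rw [Finset.sum_powerset_apply_card fun t => g (s + t) s, Finset.card_compl, nsmul_eq_mul,
    Finset.mul_sum]
  refine Finset.sum_congr rfl fun t _ => ?_
  rw [nsmul_eq_mul, mul_assoc]

lemma sum_card_card_inter_eq_sum_Icc (U : Finset ι) (g : ℕ → ℕ → ℝ) :
    ∑ B : Finset ι, g #B #(U ∩ B) = ∑ n ∈ Finset.range (Fintype.card ι + 1),
      ∑ s ∈ Finset.Icc (#U + n - Fintype.card ι) (min #U n),
        ((#U).choose s : ℝ) * ((Fintype.card ι - #U).choose (n - s) : ℝ) * g n s := by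
  have hU := U.card_le_univ
  rw [sum_card_card_inter, Finset.sum_sigma', Finset.sum_sigma']
  refine Finset.sum_nbij' (fun p => ⟨p.1 + p.2, p.1⟩) (fun p => ⟨p.2, p.1 - p.2⟩) ?_ ?_ ?_ ?_ ?_
  all_goals
    rintro ⟨s, t⟩ h
    simp only [Finset.mem_sigma, Finset.mem_range, Finset.mem_Icc] at h
  · simp only [Finset.mem_sigma, Finset.mem_range, Finset.mem_Icc]
    omega
  · simp only [Finset.mem_sigma, Finset.mem_range]
    omega
  · simp
  · simp [show t + (s - t) = s by omega]
  · simp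

lemma sum_sum_card_card_inter (g : ℕ → ℕ → ℕ → ℝ) :
    ∑ U : Finset ι, ∑ B : Finset ι, g #U #B #(U ∩ B) =
      ∑ m ∈ Finset.range (Fintype.card ι + 1), ∑ n ∈ Finset.range (Fintype.card ι + 1),
        ∑ s ∈ Finset.Icc (m + n - Fintype.card ι) (min m n),
          ((Fintype.card ι).choose s : ℝ) * ((Fintype.card ι - s).choose (m - s) : ℝ) *
            ((Fintype.card ι - m).choose (n - s) : ℝ) * g m n s := by
  simp only [fun U : Finset ι => sum_card_card_inter_eq_sum_Icc U (g #U)]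
  rw [← Finset.powerset_univ, Finset.sum_powerset_apply_card fun m =>
    ∑ n ∈ Finset.range (Fintype.card ι + 1),
      ∑ s ∈ Finset.Icc (m + n - Fintype.card ι) (min m n),
        (m.choose s : ℝ) * ((Fintype.card ι - m).choose (n - s) : ℝ) * g m n s, Finset.card_univ]
  simp only [nsmul_eq_mul, Finset.mul_sum]
  refine Finset.sum_congr rfl fun m _ => Finset.sum_congr rfl fun n _ =>
    Finset.sum_congr rfl fun s hs => ?_
  have hchoose : ((Fintype.card ι).choose m : ℝ) * (m.choose s : ℝ) =
      ((Fintype.card ι).choose s : ℝ) * ((Fintype.card ι - s).choose (m - s) : ℝ) := by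
    exact_mod_cast Nat.choose_mul ((Finset.mem_Icc.1 hs).2.trans (min_le_left m n))
  rw [← hchoose]
  ring

lemma sum_sum_patternProb_mul (ε ε' : ℝ) (g : ℕ → ℕ → ℕ → ℝ) :
    ∑ u : ι → Bool, ∑ b : ι → Bool, patternProb ε u * (patternProb ε' b *
        g #(received u) #(received b) #(received u ∩ received b)) =
      ∑ m ∈ Finset.range (Fintype.card ι + 1), ∑ mD ∈ Finset.range (Fintype.card ι + 1),
        ∑ mRD ∈ Finset.Icc (m + mD - Fintype.card ι) (min m mD),
          alphaRF (Fintype.card ι) ε ε' m mD mRD * g m mD mRD := by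
  simp only [← Finset.mul_sum]
  rw [sum_patternProb_mul ε fun U => ∑ b, patternProb ε' b * g #U #(received b) #(U ∩ received b)]
  simp only [fun U : Finset ι => sum_patternProb_mul ε' fun B => g #U #B #(U ∩ B), Finset.mul_sum]
  rw [sum_sum_card_card_inter fun m mD mRD => (1 - ε) ^ m * ε ^ (Fintype.card ι - m) *
    ((1 - ε') ^ mD * ε' ^ (Fintype.card ι - mD) * g m mD mRD)]
  refine Finset.sum_congr rfl fun m _ => Finset.sum_congr rfl fun mD _ =>
    Finset.sum_congr rfl fun mRD _ => ?_
  rw [alphaRF]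
  ring

lemma sum_patternProb_mul_sum_prod_patternProb_mul {ρ : Type*} [Fintype ρ] [DecidableEq ρ]
    (ε : ρ → ℝ) (ε' : ℝ) (g : ℕ → ℕ → ℕ → ℝ) :
    ∑ b : ι → Bool, patternProb ε' b * ∑ a, (∏ j, patternProb (ε j) (a j)) *
        g #(received (unionPattern a)) #(received b) #(received (unionPattern a) ∩ received b) =
      ∑ m ∈ Finset.range (Fintype.card ι + 1), ∑ mD ∈ Finset.range (Fintype.card ι + 1),
        ∑ mRD ∈ Finset.Icc (m + mD - Fintype.card ι) (min m mD),
          alphaRF (Fintype.card ι) (∏ j, ε j) ε' m mD mRD * g m mD mRD := by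
  have hunion : ∀ b : ι → Bool, ∑ a, (∏ j, patternProb (ε j) (a j)) *
        g #(received (unionPattern a)) #(received b) #(received (unionPattern a) ∩ received b) =
      ∑ u, patternProb (∏ j, ε j) u * g #(received u) #(received b) #(received u ∩ received b) :=
    fun b => sum_prod_patternProb_mul_unionPattern ε fun u =>
      g #(received u) #(received b) #(received u ∩ received b)
  simp only [hunion, ← sum_sum_patternProb_mul, Finset.mul_sum]
  rw [Finset.sum_comm]
  simp only [mul_left_comm]

end ErasurePatterns

section RelayModel

open Module
open scoped BigOperators

variable {F ι κ ρ τ : Type*} [Field F]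

/-- The combination of the packets `x i`, `i ∈ A`, as a linear function of the coefficients. -/
def packetCombination {V : Type*} [AddCommGroup V] [Module F V] (A : Finset ι) (x : ι → V) :
    (ι → F) →ₗ[F] V :=
  ∑ i ∈ A, (LinearMap.proj i : (ι → F) →ₗ[F] F).smulRight (x i)

lemma packetCombination_apply {V : Type*} [AddCommGroup V] [Module F V] (A : Finset ι) (x : ι → V)
    (g : ι → F) : packetCombination A x g = ∑ i ∈ A, g i • x i := by
  simp [packetCombination]

section Destination

variable [Fintype ι]

/-- The coefficient matrix `C_D` of the destination: the rows of `C` received directly, stacked with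
the packets received from the relays. Relay `j` draws one coefficient for every source packet, but
only uses those of the packets it received. -/
def destinationMatrix (C : Matrix ι κ F) (b : ι → Bool) (a : ρ → ι → Bool)
    (G : ρ → Matrix τ ι F) (d : ρ → τ → Bool) :
    Matrix ({i // b i = true} ⊕ (Σ j, {t // d j t = true})) κ F :=
  Matrix.of (Sum.elim (fun i k => C i.1 k)
    (fun p k => ∑ i : {i // a p.1 i = true}, G p.1 p.2.1 i.1 * C i.1 k))

lemma range_row_destinationMatrix [Fintype ρ] [Fintype τ] (C : Matrix ι κ F) (b : ι → Bool)
    (a : ρ → ι → Bool) (G : ρ → Matrix τ ι F) (d : ρ → τ → Bool) :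
    Set.range (destinationMatrix C b a G d).row = C.row '' received b ∪
      (fun p : ρ × τ => packetCombination (received (a p.1)) C.row ((G p.1).row p.2)) ''
        received (Function.uncurry d) := by
  have hrow : ∀ p : Σ j, {t // d j t = true}, (destinationMatrix C b a G d).row (Sum.inr p) =
      packetCombination (received (a p.1)) C.row ((G p.1).row p.2) := fun p => by
    ext k
    rw [packetCombination_apply, Finset.sum_apply,
      Finset.sum_subtype (p := fun i => a p.1 i = true) _ fun i => mem_received]
    rfl
  ext y
  constructor
  · rintro ⟨i | p, rfl⟩
    · exact Or.inl ⟨i.1, by simp [i.2], rfl⟩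
    · exact Or.inr ⟨(p.1, p.2.1), by simp [p.2.2], (hrow p).symm⟩
  · rintro (⟨i, hi, rfl⟩ | ⟨p, hp, rfl⟩)
    · exact ⟨Sum.inl ⟨i, by simpa using hi⟩, rfl⟩
    · exact ⟨Sum.inr ⟨p.1, p.2, by simpa [Function.uncurry] using hp⟩, hrow _⟩

lemma rank_destinationMatrix_eq_card_iff [Fintype κ] [Fintype ρ] [Fintype τ] (C : Matrix ι κ F)
    (b : ι → Bool) (a : ρ → ι → Bool) (G : ρ → Matrix τ ι F) (d : ρ → τ → Bool) :
    (destinationMatrix C b a G d).rank = Fintype.card κ ↔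
      spanOn F C.row (received b) ⊔
        spanOn F (fun p : ρ × τ => packetCombination (received (a p.1)) C.row ((G p.1).row p.2))
          (received (Function.uncurry d)) = ⊤ := by
  rw [Matrix.rank_eq_finrank_span_row, range_row_destinationMatrix, Submodule.span_union,
    ← Module.finrank_fintype_fun_eq_card F]
  refine ⟨Submodule.eq_top_of_finrank_eq, fun h => ?_⟩
  change finrank F (spanOn F C.row _ ⊔ spanOn F _ _ : Submodule F (κ → F)) = _
  rw [h, finrank_top]

end Destination

lemma card_received_uncurry [Fintype ρ] [Fintype τ] (d : ρ → τ → Bool) :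
    #(received (Function.uncurry d)) = ∑ j, #(received (d j)) := by
  simp only [received, Finset.card_filter]
  exact Fintype.sum_prod_type _

variable [Fintype F] [Fintype ι] [DecidableEq ι] [Fintype κ] [DecidableEq κ] [Fintype ρ]
  [DecidableEq ρ] [Fintype τ] [DecidableEq τ]

variable (F κ) in
/-- The probability of successful decoding conditional on all reception patterns. -/
noncomputable def decodingProb (b : ι → Bool) (a : ρ → ι → Bool) (d : ρ → τ → Bool) : ℝ :=
  𝔼 C : Matrix ι κ F, 𝔼 G : ρ → Matrix τ ι F,
    if (destinationMatrix C b a G d).rank = Fintype.card κ then 1 else 0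

lemma decodingProb_le_p2 (b : ι → Bool) (a : ρ → ι → Bool) (d : ρ → τ → Bool) :
    decodingProb F κ b a d ≤ P2 (Fintype.card F) (Fintype.card κ)
      (∑ j, #(received (d j)) + #(received b))
      (#(received (unionPattern a)) - #(received (unionPattern a) ∩ received b) + #(received b))
      #(received b) := by
  set U := received (unionPattern a)
  set B := received b
  have hmem : ∀ (x : ι → κ → F) (p : ρ × τ) (g : ι → F),
      packetCombination (received (a p.1)) x g ∈ spanOn F x (B ∪ U \ B) := fun x p g => by
    rw [packetCombination_apply, Finset.union_sdiff_self_eq_union]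
    refine Submodule.sum_mem _ fun i hi => Submodule.smul_mem _ _ (mem_spanOn x ?_)
    exact Finset.mem_union_right _ (received_subset_unionPattern a p.1 hi)
  have hbound := expect_pfr_zero_codim_sup_le_p2 (F := F) (V := κ → F) Finset.disjoint_sdiff
    (received (Function.uncurry d)) (fun x p => packetCombination (received (a p.1)) x) hmem
  rw [finrank_fintype_fun_eq_card, card_received_uncurry, Finset.card_sdiff, Finset.inter_comm B U]
    at hbound
  refine le_of_eq_of_le (Finset.expect_congr rfl fun C _ => ?_) hbound
  refine (Fintype.expect_equiv (Equiv.curry ρ τ (ι → F)) _ _ fun G => ?_).symm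
  simp only [pfr_zero_left, codim_eq_zero_iff]
  exact if_congr (rank_destinationMatrix_eq_card_iff C b a (fun j t => G (j, t)) d).symm rfl rfl

/-- The bound on the probability of successful decoding when the destination receives `n` packets
from the source and the relays receive `u` packets besides those. -/
noncomputable def relayBound (q K N : ℕ) (ε : ρ → ℝ) (u n : ℕ) : ℝ :=
  ∑ v ∈ Fintype.piFinset fun _ : ρ => Finset.range (N + 1),
    (∏ j, Bpmf (v j) N (ε j)) * P2 q K (∑ j, v j + n) (u + n) n

lemma relayBound_eq_zero_of_lt (q N : ℕ) (ε : ρ → ℝ) {K u n : ℕ} (h : u + n < K) :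
    relayBound q K N ε u n = 0 :=
  Finset.sum_eq_zero fun v _ => by rw [p2_eq_zero_of_right_lt q _ h, mul_zero]

lemma relayBound_eq_sum_ite (q K N : ℕ) (ε : ρ → ℝ) (u n : ℕ) :
    relayBound q K N ε u n = ∑ v ∈ Fintype.piFinset fun _ : ρ => Finset.range (N + 1),
      if K ≤ ∑ j, v j + n then
        (∏ j, Bpmf (v j) N (ε j)) * P2 q K (∑ j, v j + n) (u + n) n else 0 := by
  refine Finset.sum_congr rfl fun v _ => ?_
  split_ifs with h
  · rfl
  · rw [p2_eq_zero_of_left_lt q _ (not_le.1 h), mul_zero]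

lemma sum_mul_decodingProb_le_relayBound {ε : ρ → ℝ} (hε : ∀ j, ε j ∈ Set.Icc 0 1)
    (b : ι → Bool) (a : ρ → ι → Bool) :
    ∑ d : ρ → τ → Bool, (∏ j, patternProb (ε j) (d j)) * decodingProb F κ b a d ≤
      relayBound (Fintype.card F) (Fintype.card κ) (Fintype.card τ) ε
        (#(received (unionPattern a)) - #(received (unionPattern a) ∩ received b))
        #(received b) :=
  calc _ ≤ ∑ d : ρ → τ → Bool, (∏ j, patternProb (ε j) (d j)) * P2 _ _ _ _ _ :=
        Finset.sum_le_sum fun d _ => mul_le_mul_of_nonneg_left (decodingProb_le_p2 b a d)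
          (Finset.prod_nonneg fun j _ => patternProb_nonneg (hε j) (d j))
    _ = _ := sum_prod_patternProb_mul_card ε fun v => P2 _ _ (∑ j, v j + _) _ _

lemma sum_filter_rank_eq_sum_mul_decodingProb (εSD : ℝ) (εSR εRD : ρ → ℝ) :
    ∑ ω : Matrix ι κ F × (ι → Bool) × (ρ → ι → Bool) × (ρ → Matrix τ ι F) × (ρ → τ → Bool) with
        (destinationMatrix ω.1 ω.2.1 ω.2.2.1 ω.2.2.2.1 ω.2.2.2.2).rank = Fintype.card κ,
      (Fintype.card (Matrix ι κ F) : ℝ)⁻¹ * (∏ _j : ρ, (Fintype.card (Matrix τ ι F) : ℝ)⁻¹) *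
        patternProb εSD ω.2.1 * (∏ j, patternProb (εSR j) (ω.2.2.1 j)) *
        (∏ j, patternProb (εRD j) (ω.2.2.2.2 j)) =
    ∑ b : ι → Bool, patternProb εSD b * ∑ a, (∏ j, patternProb (εSR j) (a j)) *
      ∑ d : ρ → τ → Bool, (∏ j, patternProb (εRD j) (d j)) * decodingProb F κ b a d := by
  rw [Finset.sum_filter]
  simp only [Fintype.sum_prod_type, Finset.mul_sum]
  rw [Finset.sum_comm]
  refine Finset.sum_congr rfl fun b _ => ?_
  rw [Finset.sum_comm]
  refine Finset.sum_congr rfl fun a _ => ?_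
  rw [Finset.sum_congr rfl fun C _ => Finset.sum_comm, Finset.sum_comm]
  refine Finset.sum_congr rfl fun d _ => ?_
  simp only [decodingProb, Fintype.expect_eq_sum_div_card, div_eq_inv_mul, Finset.mul_sum]
  refine Finset.sum_congr rfl fun C _ => Finset.sum_congr rfl fun G _ => ?_
  rw [Finset.prod_const, Finset.card_univ, Fintype.card_fun, Nat.cast_pow, inv_pow]
  split_ifs <;> ring

lemma sum_mul_decodingProb_le_sum_alphaRF_mul_relayBound {εSD : ℝ} {εSR εRD : ρ → ℝ}
    (hSD : εSD ∈ Set.Icc 0 1) (hSR : ∀ j, εSR j ∈ Set.Icc 0 1)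
    (hRD : ∀ j, εRD j ∈ Set.Icc 0 1) :
    ∑ b : ι → Bool, patternProb εSD b * ∑ a, (∏ j, patternProb (εSR j) (a j)) *
        ∑ d : ρ → τ → Bool, (∏ j, patternProb (εRD j) (d j)) * decodingProb F κ b a d ≤
      ∑ m ∈ Finset.range (Fintype.card ι + 1), ∑ mD ∈ Finset.range (Fintype.card ι + 1),
        ∑ mRD ∈ Finset.Icc (m + mD - Fintype.card ι) (min m mD),
          alphaRF (Fintype.card ι) (∏ j, εSR j) εSD m mD mRD *
            relayBound (Fintype.card F) (Fintype.card κ) (Fintype.card τ) εRD (m - mRD) mD := by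
  rw [← sum_patternProb_mul_sum_prod_patternProb_mul εSR εSD fun m mD mRD =>
    relayBound _ _ _ εRD (m - mRD) mD]
  gcongr with b _ a _
  · exact patternProb_nonneg hSD b
  · exact Finset.prod_nonneg fun j _ => patternProb_nonneg (hSR j) (a j)
  · exact sum_mul_decodingProb_le_relayBound hRD b a

end RelayModel

/-- the RF model with `L ≥ 1` relays. Sample space: `C` a uniformly
random `N_S × K` matrix; `b` the destination reception pattern from the source
(w.p. `1-ε_SD` per row); `a j` the reception pattern of relay `j` (w.p. `1-ε_SR j`);
`G j` the recoding matrix of relay `j` (realised as a uniformly random `N_R × N_S`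
matrix of which only the columns of the packets received by relay `j` are used);
`d j` the destination reception pattern from relay `j` (w.p. `1-ε_RD j`). The
destination matrix `C_D` stacks `C_B` and the matrices `(G j)_{D j} · C_{A j}`;
decoding succeeds iff `rank C_D = K`. The probability of successful decoding is at
most the bound of Proposition 1, where `ε̃_SR = ∏ j ε_SR j` and the inner sum ranges
over tuples `(m'_1, …, m'_L)` with `0 ≤ m'_j ≤ N_R` and `∑ m'_j ≥ K - m_D`. -/
theorem rf_multi_relay_decoding_bound (q : ℕ) (F : Type) [Field F] [Fintype F]
    [DecidableEq F] (hF : Fintype.card F = q) (K NS NR L : ℕ) (hK : 1 ≤ K)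
    (hNS : K ≤ NS) (hL : 1 ≤ L)
    (εSD : ℝ) (εSR εRD : Fin L → ℝ) (hSD : εSD ∈ Set.Icc (0:ℝ) 1)
    (hSR : ∀ j, εSR j ∈ Set.Icc (0:ℝ) 1) (hRD : ∀ j, εRD j ∈ Set.Icc (0:ℝ) 1) :
    ∑ ω ∈ Finset.univ.filter
        (fun ω : Matrix (Fin NS) (Fin K) F × (Fin NS → Bool) ×
            (Fin L → Fin NS → Bool) × (Fin L → Matrix (Fin NR) (Fin NS) F) ×
            (Fin L → Fin NR → Bool) =>
          ((Matrix.of (Sum.elim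
              (fun (i : {i : Fin NS // ω.2.1 i = true}) (k : Fin K) => ω.1 i.1 k)
              (fun (p : Σ j : Fin L, {t : Fin NR // ω.2.2.2.2 j t = true}) (k : Fin K) =>
                ∑ i : {i : Fin NS // ω.2.2.1 p.1 i = true},
                  ω.2.2.2.1 p.1 p.2.1 i.1 * ω.1 i.1 k))).rank = K)),
      ((Fintype.card (Matrix (Fin NS) (Fin K) F) : ℝ))⁻¹ *
      (∏ _j : Fin L, ((Fintype.card (Matrix (Fin NR) (Fin NS) F) : ℝ))⁻¹) *
      (∏ i : Fin NS, (if ω.2.1 i then (1 - εSD) else εSD)) *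
      (∏ j : Fin L, ∏ i : Fin NS, (if ω.2.2.1 j i then (1 - εSR j) else εSR j)) *
      (∏ j : Fin L, ∏ t : Fin NR, (if ω.2.2.2.2 j t then (1 - εRD j) else εRD j)) ≤
    ∑ m ∈ Finset.range (NS + 1), ∑ mD ∈ Finset.range (NS + 1),
      (if K ≤ m + mD then
        ∑ mRD ∈ Finset.Icc (m + mD - NS) (min m mD),
          alphaRF NS (∏ j, εSR j) εSD m mD mRD *
            ∑ v ∈ Fintype.piFinset (fun _ : Fin L => Finset.range (NR + 1)),
              (if K ≤ (∑ j, v j) + mD then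
                (∏ j, Bpmf (v j) NR (εRD j)) *
                  P2 q K ((∑ j, v j) + mD) (m - mRD + mD) mD
               else 0)
       else 0) := by
  subst hF
  calc _ = ∑ b : Fin NS → Bool, patternProb εSD b * ∑ a, (∏ j, patternProb (εSR j) (a j)) *
          ∑ d : Fin L → Fin NR → Bool,
            (∏ j, patternProb (εRD j) (d j)) * decodingProb F (Fin K) b a d := by
        rw [← sum_filter_rank_eq_sum_mul_decodingProb, Fintype.card_fin]
        rfl
    _ ≤ ∑ m ∈ Finset.range (NS + 1), ∑ mD ∈ Finset.range (NS + 1),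
          ∑ mRD ∈ Finset.Icc (m + mD - NS) (min m mD), alphaRF NS (∏ j, εSR j) εSD m mD mRD *
            relayBound (Fintype.card F) K NR εRD (m - mRD) mD := by
        simpa only [Fintype.card_fin] using
          sum_mul_decodingProb_le_sum_alphaRF_mul_relayBound (F := F) (ι := Fin NS)
            (κ := Fin K) (τ := Fin NR) hSD hSR hRD
    _ = _ := Finset.sum_congr rfl fun m _ => Finset.sum_congr rfl fun mD _ => by
        split_ifs with h
        · simp only [relayBound_eq_sum_ite]
        · exact Finset.sum_eq_zero fun mRD _ => by
            rw [relayBound_eq_zero_of_lt _ _ _ (by omega), mul_zero]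
end

section
/- In the RF relay model with L ≥ 1 relays, the probability of successful decoding is at most ∑_{m=K}^{N_S} B(m, N_S, ε̃) · P(m, K), where ε̃ = ε_SD · ∏_{j=1}^{L} ε_SRj; that is, the decoding probability is upper-bounded by the decoding probability of a point-to-point link with N_S coded transmissions and packet erasure probability ε̃. -/
open Finset

open scoped BigOperators

/-!
Every packet that reaches the destination, directly or through a relay, lies in the row span of the
source packets heard by the destination or by at least one relay. So decoding requires this set of
source packets to have full rank, whatever the relays do. A source packet is missing from the set
only if the direct link and all source-relay links erase it, which happens independently for each
packet with probability `ε̃`: the set is distributed as the packets received over a single link with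
erasure probability `ε̃`. Over such a link, `m` packets arrive with the binomial probability, and
`m` uniformly random rows have rank `K` with probability `P(m, K)`.
-/

/-- The probability that the packets received over an erasure link are exactly those selected by
`u`, when packet `i` is erased independently with probability `ε i`. -/
noncomputable def receptionProb {ι : Type*} [Fintype ι] (ε : ι → ℝ) (u : ι → Bool) : ℝ :=
  ∏ i, if u i then 1 - ε i else ε i

/-- The coefficient matrix `C_u` of the packets of `C` selected by the reception pattern `u`. -/
def receivedRows {ι n F : Type*} (C : Matrix ι n F) (u : ι → Bool) :
    Matrix {i // u i = true} n F :=
  C.submatrix (↑) id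

/-- The coefficient matrix `C_D` at the destination: the packets `b` heard from the source, stacked
on the packets `d j` heard from each relay `j`, which recodes by `G j` the packets `a j` it heard.
Only the columns of `G j` in `a j` matter, so `G j` is indexed by all source packets. -/
def destMatrix {ι κ τ n F : Type*} [Fintype ι] [Field F] (C : Matrix ι n F) (b : ι → Bool)
    (a : κ → ι → Bool) (G : κ → Matrix τ ι F) (d : κ → τ → Bool) :
    Matrix ({i // b i = true} ⊕ Σ j, {t // d j t = true}) n F :=
  Matrix.fromRows (receivedRows C b) (Matrix.of fun p =>
    ((G p.1).submatrix id ((↑) : {i // a p.1 i = true} → ι) * receivedRows C (a p.1)) p.2)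

/-- The decoding probability of a point-to-point erasure link: the source sends uniformly random
combinations, indexed by `ι`, of `K` message packets, and decoding succeeds when the received rows
of the coefficient matrix `C` have rank `K`. -/
noncomputable def linkDecodingProb {ι : Type*} [Fintype ι] [DecidableEq ι] (F : Type*) [Field F]
    [Fintype F] (K : ℕ) (ε : ι → ℝ) : ℝ :=
  𝔼 C : Matrix ι (Fin K) F, ∑ u, receptionProb ε u * if (receivedRows C u).rank = K then 1 else 0

/-- The decoding probability of the relay model for `K` message packets, with source transmissions
indexed by `ι`, relays by `κ` and the transmissions of each relay by `τ`. Erasure probabilities may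
vary from one transmission to another. -/
noncomputable def relayDecodingProb {ι κ τ : Type*} [Fintype ι] [DecidableEq ι] [Fintype κ]
    [DecidableEq κ] [Fintype τ] [DecidableEq τ] (F : Type*) [Field F] [Fintype F] (K : ℕ)
    (εSD : ι → ℝ) (εSR : κ → ι → ℝ) (εRD : κ → τ → ℝ) : ℝ :=
  𝔼 C : Matrix ι (Fin K) F,
    ∑ b, receptionProb εSD b *
      ∑ a : κ → ι → Bool, (∏ j, receptionProb (εSR j) (a j)) *
        𝔼 G : κ → Matrix τ ι F, ∑ d : κ → τ → Bool, (∏ j, receptionProb (εRD j) (d j)) *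
          if (destMatrix C b a G d).rank = K then 1 else 0

section Reception

variable {ι κ : Type*} [Fintype ι] [Fintype κ]

lemma receptionProb_nonneg {ε : ι → ℝ} (hε : ∀ i, ε i ∈ Set.Icc 0 1) (u : ι → Bool) :
    0 ≤ receptionProb ε u := by
  refine Finset.prod_nonneg fun i _ => ?_
  split_ifs
  · exact sub_nonneg.mpr (hε i).2
  · exact (hε i).1

variable [DecidableEq ι]

lemma sum_receptionProb (ε : ι → ℝ) : ∑ u, receptionProb ε u = 1 := by
  simp [receptionProb, ← Fintype.prod_sum fun i (x : Bool) => if x then 1 - ε i else ε i]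

lemma sum_receptionProb_mul_card (ε : ℝ) (g : ℕ → ℝ) :
    ∑ u : ι → Bool, receptionProb (fun _ => ε) u * g #{i | u i = true} =
      ∑ m ∈ range (Fintype.card ι + 1), Bpmf m (Fintype.card ι) ε * g m := by
  calc ∑ u : ι → Bool, receptionProb (fun _ => ε) u * g #{i | u i = true}
      = ∑ s : Finset ι, (1 - ε) ^ #s * ε ^ (Fintype.card ι - #s) * g #s := by
        refine Finset.sum_nbij' (fun u => ({i | u i = true} : Finset ι)) (fun s i => decide (i ∈ s))
          (by simp) (by simp) (fun u _ => by ext; simp) (fun s _ => by ext; simp) fun u _ => ?_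
        rw [receptionProb, Finset.prod_ite, Finset.prod_const, Finset.prod_const,
          ← Finset.compl_filter, Finset.card_compl]
    _ = ∑ m ∈ range (Fintype.card ι + 1), Bpmf m (Fintype.card ι) ε * g m := by
        rw [← Finset.powerset_univ, Finset.sum_powerset_apply_card
          (fun m => (1 - ε) ^ m * ε ^ (Fintype.card ι - m) * g m), Finset.card_univ]
        simp only [nsmul_eq_mul, Bpmf, mul_assoc]

lemma sum_prod_mul_comp_s14 {R : Type*} [CommSemiring R] {α β : ι → Type*} [∀ i, Fintype (α i)]
    [∀ i, Fintype (β i)] [∀ i, DecidableEq (β i)] (φ : ∀ i, α i → β i) (w : ∀ i, α i → R)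
    (f : (∀ i, β i) → R) :
    ∑ c : ∀ i, α i, (∏ i, w i (c i)) * f (fun i => φ i (c i)) =
      ∑ u : ∀ i, β i, (∏ i, ∑ x with φ i x = u i, w i x) * f u := by
  rw [← Finset.sum_fiberwise univ fun (c : ∀ i, α i) i => φ i (c i)]
  refine Finset.sum_congr rfl fun u _ => ?_
  rw [Finset.prod_univ_sum, Finset.sum_mul]
  refine Finset.sum_congr (by ext c; simp [funext_iff]) fun c hc => ?_
  have hcu : (fun i => φ i (c i)) = u := by
    ext1 i
    simpa using Fintype.mem_piFinset.mp hc i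
  rw [hcu]

lemma sum_receptionProb_filter_sup (ε : ι → ℝ) (v : Bool) :
    ∑ c : ι → Bool with univ.sup c = v, receptionProb ε c =
      if v then 1 - ∏ i, ε i else ∏ i, ε i := by
  have hfalse : ∑ c : ι → Bool with univ.sup c = false, receptionProb ε c = ∏ i, ε i := by
    have hbot : ({c | univ.sup c = false} : Finset (ι → Bool)) = {⊥} := by
      ext c
      rw [mem_filter_univ, mem_singleton, ← bot_eq_false, Finset.sup_eq_bot_iff]
      simp [funext_iff]
    simp [hbot, receptionProb]
  cases v with
  | false => simpa using hfalse
  | true =>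
    have htotal := sum_receptionProb ε
    rw [← Finset.sum_fiberwise univ fun c : ι → Bool => univ.sup c, Fintype.sum_bool,
      hfalse] at htotal
    simpa using eq_sub_of_add_eq htotal

variable [DecidableEq κ]

lemma sum_prod_receptionProb_mul_sup (ε : κ → ι → ℝ) (f : (ι → Bool) → ℝ) :
    ∑ a : κ → ι → Bool, (∏ j, receptionProb (ε j) (a j)) * f (univ.sup a) =
      ∑ u, receptionProb (∏ j, ε j) u * f u := by
  calc ∑ a : κ → ι → Bool, (∏ j, receptionProb (ε j) (a j)) * f (univ.sup a)
      = ∑ c : ι → κ → Bool, (∏ i, receptionProb (ε · i) (c i)) * f (fun i => univ.sup (c i)) := by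
        refine Fintype.sum_equiv (Equiv.piComm fun _ _ => Bool) _ _ fun a => ?_
        congr 1
        · exact Finset.prod_comm
        · congr 1
          ext1 i
          exact Finset.sup_apply ..
    _ = ∑ u : ι → Bool, (∏ i, ∑ x with univ.sup x = u i, receptionProb (ε · i) x) * f u :=
        sum_prod_mul_comp_s14 (fun _ x => univ.sup x) (fun i => receptionProb (ε · i)) f
    _ = ∑ u, receptionProb (∏ j, ε j) u * f u := by
        simp_rw [sum_receptionProb_filter_sup, receptionProb, Finset.prod_apply]

lemma sum_prod_receptionProb (ε : κ → ι → ℝ) :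
    ∑ a : κ → ι → Bool, ∏ j, receptionProb (ε j) (a j) = 1 := by
  simpa [sum_receptionProb] using sum_prod_receptionProb_mul_sup ε fun _ => 1

lemma sum_receptionProb_mul_sum_sup (δ : ι → ℝ) (ε : κ → ι → ℝ) (f : (ι → Bool) → ℝ) :
    ∑ b, receptionProb δ b *
        ∑ a : κ → ι → Bool, (∏ j, receptionProb (ε j) (a j)) * f (b ⊔ univ.sup a) =
      ∑ u, receptionProb (δ * ∏ j, ε j) u * f u := by
  have h := sum_prod_receptionProb_mul_sup (fun o : Option κ => o.elim δ ε) f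
  rw [Fintype.prod_option] at h
  refine Eq.trans ?_ h
  simp only [Finset.mul_sum, ← Fintype.sum_prod_type']
  refine Fintype.sum_equiv (Equiv.piOptionEquivProd (β := fun _ => ι → Bool)).symm _ _ ?_
  rintro ⟨b, a⟩
  have hsup : univ.sup (Equiv.piOptionEquivProd.symm (b, a)) = b ⊔ univ.sup a := by
    simp [univ_option, insertNone, Function.comp_def]
  simp [hsup, Fintype.prod_option, mul_assoc]

end Reception

section Rank

lemma rank_le_rank_of_range_row_subset {m m' n F : Type*} [Finite m] [Finite m'] [Fintype n]
    [Field F] {A : Matrix m n F} {B : Matrix m' n F}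
    (h : Set.range A.row ⊆ Submodule.span F (Set.range B.row)) : A.rank ≤ B.rank := by
  rw [A.rank_eq_finrank_span_row, B.rank_eq_finrank_span_row]
  exact Submodule.finrank_mono (Submodule.span_le.mpr h)

lemma row_mul_mem_span {l m n R : Type*} [Fintype m] [CommSemiring R] (M : Matrix l m R)
    (A : Matrix m n R) (i : l) : (M * A) i ∈ Submodule.span R (Set.range A.row) := by
  rw [← range_vecMulLinear, Matrix.mul_apply_eq_vecMul]
  exact ⟨M i, rfl⟩

lemma range_row_receivedRows_mono {ι n F : Type*} (C : Matrix ι n F) :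
    Monotone fun u => Set.range (receivedRows C u).row := by
  rintro u v huv _ ⟨⟨i, hi⟩, rfl⟩
  exact ⟨⟨i, huv i hi⟩, rfl⟩

lemma rank_destMatrix_le {ι κ τ n F : Type*} [Fintype ι] [Fintype κ] [Finite τ] [Fintype n]
    [Field F] (C : Matrix ι n F) (b : ι → Bool) (a : κ → ι → Bool) (G : κ → Matrix τ ι F)
    (d : κ → τ → Bool) :
    (destMatrix C b a G d).rank ≤ (receivedRows C (b ⊔ univ.sup a)).rank := by
  refine rank_le_rank_of_range_row_subset ?_
  rintro _ ⟨i | ⟨j, t⟩, rfl⟩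
  · exact Submodule.subset_span (range_row_receivedRows_mono C le_sup_left ⟨i, rfl⟩)
  · have haj : a j ≤ b ⊔ univ.sup a := (Finset.le_sup (mem_univ j)).trans le_sup_right
    exact Submodule.span_mono (range_row_receivedRows_mono C haj) (row_mul_mem_span _ _ _)

lemma rank_eq_card_iff_linearIndependent_col {m n F : Type*} [Fintype n] [Field F]
    (A : Matrix m n F) : A.rank = Fintype.card n ↔ LinearIndependent F A.col := by
  rw [A.rank_eq_finrank_span_cols, linearIndependent_iff_card_eq_finrank_span, eq_comm]
  rfl

end Rank

section UniformMatrix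

lemma Pfr_eq_zero_of_lt {q m K : ℕ} (h : m < K) : Pfr q m K = 0 :=
  Finset.prod_eq_zero (mem_range.mpr h) (by simp)

lemma Pfr_mul_pow {q : ℕ} (hq : q ≠ 0) (m K : ℕ) :
    Pfr q m K * ((q : ℝ) ^ m) ^ K = ∏ i ∈ range K, ((q : ℝ) ^ m - (q : ℝ) ^ i) := by
  have hq' : (q : ℝ) ≠ 0 := Nat.cast_ne_zero.mpr hq
  calc Pfr q m K * ((q : ℝ) ^ m) ^ K
      = ∏ i ∈ range K, (1 - (q : ℝ) ^ ((i : ℤ) - (m : ℤ))) * (q : ℝ) ^ m := by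
        rw [← Finset.prod_mul_pow_card, card_range, Pfr]
    _ = ∏ i ∈ range K, ((q : ℝ) ^ m - (q : ℝ) ^ i) := by
        refine Finset.prod_congr rfl fun i _ => ?_
        rw [zpow_sub₀ hq', zpow_natCast, zpow_natCast]
        field_simp

lemma cast_card_linearIndependent_fun (F m : Type*) [Field F] [Fintype F] [Fintype m] (K : ℕ) :
    (Nat.card {s : Fin K → m → F // LinearIndependent F s} : ℝ) =
      ∏ i ∈ range K, ((Fintype.card F : ℝ) ^ Fintype.card m - (Fintype.card F : ℝ) ^ i) := by
  rcases lt_or_ge (Fintype.card m) K with hlt | hle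
  · have : IsEmpty {s : Fin K → m → F // LinearIndependent F s} :=
      ⟨fun s => hlt.not_ge (by simpa using s.2.fintype_card_le_finrank)⟩
    rw [Nat.card_of_isEmpty, Nat.cast_zero,
      Finset.prod_eq_zero (mem_range.mpr hlt) (sub_self _)]
  · rw [card_linearIndependent (by simpa using hle), Module.finrank_fintype_fun_eq_card,
      Finset.prod_range, Nat.cast_prod]
    refine Finset.prod_congr rfl fun i _ => ?_
    rw [Nat.cast_sub (Nat.pow_le_pow_right Fintype.card_pos (i.2.le.trans hle)), Nat.cast_pow,
      Nat.cast_pow]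

lemma expect_rank_eq (F m : Type*) [Field F] [Fintype F] [Fintype m] [DecidableEq m] (K : ℕ) :
    𝔼 A : Matrix m (Fin K) F, (if A.rank = K then (1 : ℝ) else 0) =
      Pfr (Fintype.card F) (Fintype.card m) K := by
  classical
  have hF : (Fintype.card F : ℝ) ≠ 0 := Nat.cast_ne_zero.mpr Fintype.card_ne_zero
  calc 𝔼 A : Matrix m (Fin K) F, (if A.rank = K then (1 : ℝ) else 0)
      = 𝔼 s : Fin K → m → F, if LinearIndependent F s then (1 : ℝ) else 0 := by
        refine Fintype.expect_equiv (Equiv.piComm fun _ _ => F) _ _ fun A => ?_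
        congr 1
        have h := rank_eq_card_iff_linearIndependent_col A
        rw [Fintype.card_fin] at h
        exact propext h
    _ = Nat.card {s : Fin K → m → F // LinearIndependent F s} / Fintype.card (Fin K → m → F) := by
        rw [Fintype.expect_eq_sum_div_card, Finset.sum_boole, Nat.card_eq_fintype_card,
          Fintype.card_subtype]
    _ = Pfr (Fintype.card F) (Fintype.card m) K := by
        rw [cast_card_linearIndependent_fun, ← Pfr_mul_pow Fintype.card_ne_zero]
        simp [hF]

lemma expect_comp_subtypeVal {ι α M : Type*} [Fintype ι] [DecidableEq ι] [Fintype α] [Nonempty α]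
    [AddCommMonoid M] [Module ℚ≥0 M] (p : ι → Prop) [DecidablePred p]
    (f : ({i // p i} → α) → M) :
    𝔼 c : ι → α, f (fun i => c i) = 𝔼 x, f x := by
  calc 𝔼 c : ι → α, f (fun i => c i)
      = 𝔼 x : ({i // p i} → α) × ({i // ¬p i} → α), f x.1 :=
        Fintype.expect_equiv (Equiv.piEquivPiSubtypeProd p fun _ => α) _ _ fun _ => rfl
    _ = 𝔼 x, f x := by
        rw [← univ_product_univ, Finset.expect_product]
        simp only [Fintype.expect_const]

lemma expect_rank_receivedRows_eq {ι : Type*} (F : Type*) [Field F] [Fintype F] [Fintype ι]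
    [DecidableEq ι] (K : ℕ) (u : ι → Bool) :
    𝔼 C : Matrix ι (Fin K) F, (if (receivedRows C u).rank = K then (1 : ℝ) else 0) =
      Pfr (Fintype.card F) #{i | u i = true} K := by
  rw [← Fintype.card_subtype, ← expect_rank_eq]
  exact expect_comp_subtypeVal (α := Fin K → F) (fun i => u i = true)
    fun A => if (Matrix.of A).rank = K then (1 : ℝ) else 0

end UniformMatrix

section DecodingProbability

variable {ι κ τ F : Type*} [Fintype ι] [DecidableEq ι] [Field F] [Fintype F] {K : ℕ}

lemma linkDecodingProb_const (ε : ℝ) :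
    linkDecodingProb (ι := ι) F K (fun _ => ε) =
      ∑ m ∈ Icc K (Fintype.card ι), Bpmf m (Fintype.card ι) ε * Pfr (Fintype.card F) m K := by
  calc linkDecodingProb (ι := ι) F K (fun _ => ε)
      = ∑ u : ι → Bool, receptionProb (fun _ => ε) u *
          Pfr (Fintype.card F) #{i | u i = true} K := by
        simp only [linkDecodingProb, Finset.expect_sum_comm, ← Finset.mul_expect,
          expect_rank_receivedRows_eq]
    _ = ∑ m ∈ range (Fintype.card ι + 1),
          Bpmf m (Fintype.card ι) ε * Pfr (Fintype.card F) m K :=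
        sum_receptionProb_mul_card ε fun m => Pfr (Fintype.card F) m K
    _ = ∑ m ∈ Icc K (Fintype.card ι), Bpmf m (Fintype.card ι) ε * Pfr (Fintype.card F) m K := by
        refine (Finset.sum_subset (fun m hm => ?_) fun m hm hmK => ?_).symm
        · exact mem_range.mpr (Nat.lt_succ_of_le (mem_Icc.mp hm).2)
        · have hlt : m < K := by
            simp only [mem_range, mem_Icc] at hm hmK
            omega
          rw [Pfr_eq_zero_of_lt hlt, mul_zero]

variable [Fintype κ] [DecidableEq κ] [Fintype τ] [DecidableEq τ]

lemma expect_sum_rank_destMatrix_le {εRD : κ → τ → ℝ} (hRD : ∀ j t, εRD j t ∈ Set.Icc 0 1)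
    (C : Matrix ι (Fin K) F) (b : ι → Bool) (a : κ → ι → Bool) :
    (𝔼 G : κ → Matrix τ ι F, ∑ d : κ → τ → Bool, (∏ j, receptionProb (εRD j) (d j)) *
        if (destMatrix C b a G d).rank = K then 1 else 0) ≤
      if (receivedRows C (b ⊔ univ.sup a)).rank = K then 1 else 0 := by
  set decodable : ℝ := if (receivedRows C (b ⊔ univ.sup a)).rank = K then 1 else 0
  have decodable_nonneg : 0 ≤ decodable := by positivity
  have indicator_le_decodable (G : κ → Matrix τ ι F) (d : κ → τ → Bool) :
      (if (destMatrix C b a G d).rank = K then 1 else 0) ≤ decodable := by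
    have hfull (h : (destMatrix C b a G d).rank = K) :
        (receivedRows C (b ⊔ univ.sup a)).rank = K :=
      le_antisymm ((Matrix.rank_le_card_width _).trans_eq (Fintype.card_fin K))
        (h.ge.trans (rank_destMatrix_le C b a G d))
    split_ifs with h
    · simp [decodable, hfull h]
    · exact decodable_nonneg
  calc _ ≤ 𝔼 _G : κ → Matrix τ ι F, ∑ d : κ → τ → Bool,
        (∏ j, receptionProb (εRD j) (d j)) * decodable := by
        gcongr with G _ d
        · exact Finset.prod_nonneg fun j _ => receptionProb_nonneg (hRD j) _
        · exact indicator_le_decodable G d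
    _ = decodable := by
        rw [Fintype.expect_const, ← Finset.sum_mul, sum_prod_receptionProb, one_mul]

lemma relayDecodingProb_le_linkDecodingProb {εSD : ι → ℝ} {εSR : κ → ι → ℝ} {εRD : κ → τ → ℝ}
    (hSD : ∀ i, εSD i ∈ Set.Icc 0 1) (hSR : ∀ j i, εSR j i ∈ Set.Icc 0 1)
    (hRD : ∀ j t, εRD j t ∈ Set.Icc 0 1) :
    relayDecodingProb F K εSD εSR εRD ≤ linkDecodingProb F K (εSD * ∏ j, εSR j) := by
  refine Finset.expect_le_expect fun C _ => ?_
  rw [← sum_receptionProb_mul_sum_sup]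
  gcongr with b _ a
  · exact receptionProb_nonneg hSD b
  · exact Finset.prod_nonneg fun j _ => receptionProb_nonneg (hSR j) _
  · exact expect_sum_rank_destMatrix_le hRD C b a

lemma relayDecodingProb_eq_sum (εSD : ι → ℝ) (εSR : κ → ι → ℝ) (εRD : κ → τ → ℝ) :
    relayDecodingProb F K εSD εSR εRD =
      ∑ ω : Matrix ι (Fin K) F × (ι → Bool) × (κ → ι → Bool) × (κ → Matrix τ ι F) × (κ → τ → Bool)
        with (destMatrix ω.1 ω.2.1 ω.2.2.1 ω.2.2.2.1 ω.2.2.2.2).rank = K,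
        (Fintype.card (Matrix ι (Fin K) F) : ℝ)⁻¹ *
          (∏ _j : κ, (Fintype.card (Matrix τ ι F) : ℝ)⁻¹) *
          receptionProb εSD ω.2.1 *
          (∏ j, receptionProb (εSR j) (ω.2.2.1 j)) *
          ∏ j, receptionProb (εRD j) (ω.2.2.2.2 j) := by
  have hcard : (∏ _j : κ, (Fintype.card (Matrix τ ι F) : ℝ)⁻¹) =
      (Fintype.card (κ → Matrix τ ι F) : ℝ)⁻¹ := by
    simp
  simp only [relayDecodingProb, Finset.sum_filter, Fintype.sum_prod_type,
    Fintype.expect_eq_sum_div_card, hcard, div_eq_inv_mul, Finset.mul_sum, mul_ite, mul_one,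
    mul_zero]
  congr! 6
  ring

end DecodingProbability

/-- simplified bound: in the RF model with `L ≥ 1` relays (same sample
space, weights and decoding event as in the general RF model: `C` a uniformly random
`N_S × K` matrix; `b` the destination reception pattern from the source; `a j` the
reception pattern of relay `j`; `G j` the recoding matrix of relay `j`, realised as a
uniformly random `N_R × N_S` matrix of which only the columns of the packets received
by relay `j` are used; `d j` the destination reception pattern from relay `j`), the
probability of successful decoding is at most `∑_{m=K}^{N_S} B(m, N_S, ε̃) P(m, K)`,
where `ε̃ = ε_SD · ∏_j ε_SR j`. -/
theorem rf_simplified_bound (q : ℕ) (F : Type) [Field F] [Fintype F]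
    [DecidableEq F] (hF : Fintype.card F = q) (K NS NR L : ℕ) (hK : 1 ≤ K)
    (hNS : K ≤ NS) (hL : 1 ≤ L)
    (εSD : ℝ) (εSR εRD : Fin L → ℝ) (hSD : εSD ∈ Set.Icc (0:ℝ) 1)
    (hSR : ∀ j, εSR j ∈ Set.Icc (0:ℝ) 1) (hRD : ∀ j, εRD j ∈ Set.Icc (0:ℝ) 1) :
    ∑ ω ∈ Finset.univ.filter
        (fun ω : Matrix (Fin NS) (Fin K) F × (Fin NS → Bool) ×
            (Fin L → Fin NS → Bool) × (Fin L → Matrix (Fin NR) (Fin NS) F) ×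
            (Fin L → Fin NR → Bool) =>
          ((Matrix.of (Sum.elim
              (fun (i : {i : Fin NS // ω.2.1 i = true}) (k : Fin K) => ω.1 i.1 k)
              (fun (p : Σ j : Fin L, {t : Fin NR // ω.2.2.2.2 j t = true}) (k : Fin K) =>
                ∑ i : {i : Fin NS // ω.2.2.1 p.1 i = true},
                  ω.2.2.2.1 p.1 p.2.1 i.1 * ω.1 i.1 k))).rank = K)),
      ((Fintype.card (Matrix (Fin NS) (Fin K) F) : ℝ))⁻¹ *
      (∏ _j : Fin L, ((Fintype.card (Matrix (Fin NR) (Fin NS) F) : ℝ))⁻¹) *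
      (∏ i : Fin NS, (if ω.2.1 i then (1 - εSD) else εSD)) *
      (∏ j : Fin L, ∏ i : Fin NS, (if ω.2.2.1 j i then (1 - εSR j) else εSR j)) *
      (∏ j : Fin L, ∏ t : Fin NR, (if ω.2.2.2.2 j t then (1 - εRD j) else εRD j)) ≤
    ∑ m ∈ Finset.Icc K NS, Bpmf m NS (εSD * ∏ j, εSR j) * Pfr q m K := by
  subst hF
  calc _ = relayDecodingProb F K (fun _ => εSD) (fun j _ => εSR j) (fun j (_ : Fin NR) => εRD j) :=
        (relayDecodingProb_eq_sum _ _ _).symm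
    _ ≤ linkDecodingProb F K ((fun _ => εSD) * ∏ j, fun _ : Fin NS => εSR j) :=
        relayDecodingProb_le_linkDecodingProb (fun _ => hSD) (fun j _ => hSR j) fun j _ => hRD j
    _ = linkDecodingProb F K fun _ : Fin NS => εSD * ∏ j, εSR j := by
        congr 1
        ext i
        simp
    _ = ∑ m ∈ Icc K NS, Bpmf m NS (εSD * ∏ j, εSR j) * Pfr (Fintype.card F) m K := by
        rw [linkDecodingProb_const, Fintype.card_fin]
end
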